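/- Let V be a finite set, γ ∈ (0,1], and let F be a set function on subsets of V that is monotone non-decreasing (S ⊆ T implies F(S) ≤ F(T)) and satisfies ∑_{j∈T} (F(S∪{j}) − F(S)) ≥ γ·(F(S∪T) − F(S)) for all disjoint S, T ⊆ V. Then for every S ⊆ V and every S* ⊆ V with |S*| ≤ k and F(S) < F(S*), there exists j ∈ S* \ S such that F(S∪{j}) − F(S) ≥ (γ/k)·(F(S*) − F(S)). -/

import Mathlib

open scoped BigOperators

/-- Per-step progress guarantee for greedy selection on a `γ`-weakly
submodular monotone set function: if `|S*| ≤ k` and `F(S) < F(S*)`, some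
`j ∈ S* \ S` gives marginal gain at least `(γ/k)·(F(S*) − F(S))`. -/
theorem greedy_step_progress
    {V : Type*} [Fintype V] [DecidableEq V]
    (γ : ℝ) (hγ0 : 0 < γ) (hγ1 : γ ≤ 1)
    (F : Finset V → ℝ)
    (hmono : ∀ S T : Finset V, S ⊆ T → F S ≤ F T)
    (hweak : ∀ S T : Finset V, Disjoint S T →
      ∑ j ∈ T, (F (S ∪ {j}) - F S) ≥ γ * (F (S ∪ T) - F S))
    (k : ℕ) (S Sstar : Finset V) (hk : Sstar.card ≤ k)
    (hFS : F S < F Sstar) :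
    ∃ j ∈ Sstar \ S, F (S ∪ {j}) - F S ≥ (γ / k) * (F Sstar - F S) := by
  by_contra! hcon
  have hne : (Sstar \ S).Nonempty := by
    rw [Finset.sdiff_nonempty]
    intro h
    exact absurd (hmono _ _ h) (not_le.mpr hFS)
  have hcard : (Sstar \ S).card ≤ k := (Finset.card_le_card Finset.sdiff_subset).trans hk
  have hkpos : (0 : ℝ) < k := by
    exact_mod_cast lt_of_lt_of_le hne.card_pos hcard
  have h1 := hweak S (Sstar \ S) Finset.disjoint_sdiff
  have h2 : F Sstar ≤ F (S ∪ Sstar \ S) := by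
    apply hmono
    rw [Finset.union_sdiff_self_eq_union]
    exact Finset.subset_union_right
  have h3 := Finset.sum_lt_sum_of_nonempty hne hcon
  rw [Finset.sum_const, nsmul_eq_mul] at h3
  have hc : 0 ≤ γ / k * (F Sstar - F S) :=
    mul_nonneg (div_nonneg hγ0.le hkpos.le) (sub_nonneg.mpr hFS.le)
  have h4 : ((Sstar \ S).card : ℝ) * (γ / k * (F Sstar - F S))
      ≤ k * (γ / k * (F Sstar - F S)) :=
    mul_le_mul_of_nonneg_right (by exact_mod_cast hcard) hc
  have h5 : (k : ℝ) * (γ / k * (F Sstar - F S)) = γ * (F Sstar - F S) := by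
    field_simp
  have h6 : γ * (F Sstar - F S) ≤ γ * (F (S ∪ Sstar \ S) - F S) :=
    mul_le_mul_of_nonneg_left (by linarith) hγ0.le
  linarith
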